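/- Let D be a nonempty minimal Enriques diagram with exactly one root R. If cod(D) ≤ 10, then 2 ≤ m_R ≤ 4. -/

import Mathlib

open Classical Finset

/-- The raw data of a finite weighted forest equipped with a proximity relation.
The vertices are the elements of `Fin n`; `parent v` is the immediate predecessor of `v`
(`none` iff `v` is a root); `wt v` is the weight of `v`; and `prox a b` means
that `a` is proximate to `b`. -/
structure PreDiagram where
  n : ℕ
  parent : Fin n → Option (Fin n)
  wt : Fin n → ℕ
  prox : Fin n → Fin n → Prop

namespace PreDiagram

variable (D : PreDiagram)

/-- `a` is the immediate predecessor of `b`. -/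
def ImPred (a b : Fin D.n) : Prop := D.parent b = some a

/-- `a` is a predecessor of `b` (reflexive-transitive closure of `ImPred`). -/
def Pred (a b : Fin D.n) : Prop := Relation.ReflTransGen D.ImPred a b

/-- `a` is a proper predecessor of `b`. -/
def ProperPred (a b : Fin D.n) : Prop := Relation.TransGen D.ImPred a b

/-- `a` is a remote predecessor of `b`: a proper but not immediate predecessor. -/
def RemotePred (a b : Fin D.n) : Prop := D.ProperPred a b ∧ ¬ D.ImPred a b

def IsRoot (v : Fin D.n) : Prop := D.parent v = none

/-- A leaf is a vertex with no proper successor. -/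
def IsLeaf (v : Fin D.n) : Prop := ∀ w, ¬ D.ImPred v w

/-- `a` is remotely proximate to `b`: proximate to `b`, and `b` is a remote predecessor. -/
def RemoteProx (a b : Fin D.n) : Prop := D.prox a b ∧ D.RemotePred b a

/-- A satellite is a vertex proximate to a remote predecessor. -/
def IsSatellite (v : Fin D.n) : Prop := ∃ t, D.RemoteProx v t

/-- A free vertex is one that is not a satellite. -/
def IsFree (v : Fin D.n) : Prop := ¬ D.IsSatellite v

/-- The laws of a minimal Enriques diagram. -/
structure IsMED : Prop where
  /-- The graph is a forest: no vertex is a proper predecessor of itself. -/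
  forest : ∀ v, ¬ D.ProperPred v v
  /-- Every weight is at least `1`. -/
  wt_pos : ∀ v, 1 ≤ D.wt v
  /-- Law of Proximity: a root is proximate to no vertex. -/
  root_not_prox : ∀ v, D.IsRoot v → ∀ w, ¬ D.prox v w
  /-- Law of Proximity: a non-root is proximate to its immediate predecessor. -/
  prox_parent : ∀ v u, D.parent v = some u → D.prox v u
  /-- Law of Proximity: any other vertex a non-root is proximate to is a remote predecessor. -/
  prox_remote : ∀ v u w, D.parent v = some u → D.prox v w → w ≠ u → D.RemotePred w v
  /-- Law of Proximity: a non-root is proximate to at most one vertex other than its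
  immediate predecessor. -/
  prox_unique : ∀ v u w w', D.parent v = some u → D.prox v w → D.prox v w' →
      w ≠ u → w' ≠ u → w = w'
  /-- Law of Proximity: if `a` is proximate to `b` and `c` lies properly between them,
  then `c` is proximate to `b`. -/
  prox_between : ∀ a b c, D.prox a b → D.ProperPred b c → D.ProperPred c a → D.prox c b
  /-- Proximity Inequality. -/
  prox_ineq : ∀ v, ∑ w ∈ univ.filter (fun w => D.prox w v), D.wt w ≤ D.wt v
  /-- Law of Succession: a vertex `v` has at most `wt v` immediate successors. -/
  succ_card : ∀ v, (univ.filter (fun w => D.ImPred v w)).card ≤ D.wt v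
  /-- Law of Succession: at most two immediate successors are satellites. -/
  succ_sat : ∀ v w₁ w₂ w₃, D.ImPred v w₁ → D.ImPred v w₂ → D.ImPred v w₃ →
      D.IsSatellite w₁ → D.IsSatellite w₂ → D.IsSatellite w₃ →
      w₁ ≠ w₂ → w₁ ≠ w₃ → w₂ ≠ w₃ → False
  /-- Law of Succession: two distinct immediate successors of the same vertex cannot be
  satellites of the same vertex. -/
  succ_sat_diff : ∀ v w₁ w₂ t, D.ImPred v w₁ → D.ImPred v w₂ → w₁ ≠ w₂ →
      D.RemoteProx w₁ t → D.RemoteProx w₂ t → False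
  /-- Law of Minimality: every leaf of weight `1` is a satellite. -/
  minimal : ∀ v, D.IsLeaf v → D.wt v = 1 → D.IsSatellite v

/-- The number of roots. -/
noncomputable def rts : ℕ := (univ.filter (fun v => D.IsRoot v)).card

/-- The number of free vertices. -/
noncomputable def frs : ℕ := (univ.filter (fun v => D.IsFree v)).card

/-- `dim D = rts D + frs D`. -/
noncomputable def dimD : ℕ := D.rts + D.frs

/-- `deg D = Σ_V C(m_V + 1, 2)`. -/
def degD : ℕ := ∑ v, (D.wt v + 1).choose 2

/-- `cod D = deg D - dim D`. -/
noncomputable def cod : ℤ := (D.degD : ℤ) - (D.dimD : ℤ)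

/-- `δ(D) = Σ_V C(m_V, 2)`. -/
def deltaD : ℕ := ∑ v, (D.wt v).choose 2

/-- `r(D) = Σ_V (m_V - Σ_{W ≻ V} m_W)`. -/
noncomputable def rCh : ℤ :=
  ∑ v, ((D.wt v : ℤ) - ∑ w ∈ univ.filter (fun w => D.prox w v), (D.wt w : ℤ))

/-- `μ(D) = 2 δ(D) - r(D) + rts D`. -/
noncomputable def mu : ℤ := 2 * (D.deltaD : ℤ) - D.rCh + (D.rts : ℤ)

/-- An isomorphism of diagrams: a weight-preserving bijection of the vertices preserving
the immediate-predecessor and proximity relations. -/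
structure Iso (D₁ D₂ : PreDiagram) where
  toEquiv : Fin D₁.n ≃ Fin D₂.n
  wt_eq : ∀ v, D₂.wt (toEquiv v) = D₁.wt v
  imPred_iff : ∀ a b, D₂.ImPred (toEquiv a) (toEquiv b) ↔ D₁.ImPred a b
  prox_iff : ∀ a b, D₂.prox (toEquiv a) (toEquiv b) ↔ D₁.prox a b

def Isomorphic (D₁ D₂ : PreDiagram) : Prop := Nonempty (Iso D₁ D₂)

/-- A realization of `D'` as a subdiagram of `D`: an injection of the vertices such that
the weight of a vertex of `D'` is at most its weight in `D`, and the succession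
(predecessor) and proximity relations of `D'` are the ones induced from `D`. -/
structure Subdiagram (D' D : PreDiagram) where
  toFun : Fin D'.n → Fin D.n
  inj : Function.Injective toFun
  wt_le : ∀ v, D'.wt v ≤ D.wt (toFun v)
  pred_iff : ∀ a b, D'.Pred a b ↔ D.Pred (toFun a) (toFun b)
  prox_iff : ∀ a b, D'.prox a b ↔ D.prox (toFun a) (toFun b)

def IsSubdiagram (D' D : PreDiagram) : Prop := Nonempty (Subdiagram D' D)

/-- The parent function of a chain `0 → 1 → ⋯ → n-1`. -/
def chainParent (n : ℕ) (v : Fin n) : Option (Fin n) :=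
  if v.val = 0 then none
  else some ⟨v.val - 1, lt_of_le_of_lt (Nat.sub_le _ _) v.isLt⟩

/-- The diagram `A_k` (`k ≥ 1`): for `k = 2i-1`, a chain of `i` free vertices of weight `2`;
for `k = 2i`, such a chain followed by a chain of two vertices of weight `1`, both
proximate to the `i`-th weight-`2` vertex. -/
def diagA (k : ℕ) : PreDiagram where
  n := if k % 2 = 0 then k / 2 + 2 else (k + 1) / 2
  parent := chainParent _
  wt := fun v => if v.val < (k + 1) / 2 then 2 else 1
  prox := fun a b => a.val = b.val + 1 ∨
    (k % 2 = 0 ∧ a.val = k / 2 + 1 ∧ b.val + 1 = k / 2)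

/-- The diagram `D_k` (`k ≥ 4`): a root of weight `3`, followed by nothing if `k = 4`,
by two vertices of weight `1` both proximate to the root if `k = 5`, and by the diagram
`A_{k-5}` if `k ≥ 6`. -/
def diagD (k : ℕ) : PreDiagram where
  n := (k - 4) / 2 + (if k % 2 = 0 then 1 else 3)
  parent := chainParent _
  wt := fun v => if v.val = 0 then 3 else if v.val ≤ (k - 4) / 2 then 2 else 1
  prox := fun a b => a.val = b.val + 1 ∨
    (k % 2 = 1 ∧ a.val = (k - 4) / 2 + 2 ∧ b.val = (k - 4) / 2)

/-- The diagram `E_{6l+j}` (`l ≥ 1`, `j ∈ {0,1,2}`), with argument `m = 6l + j`. -/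
def diagE (m : ℕ) : PreDiagram where
  n := m / 6 + (if m % 6 = 1 then 2 else 3)
  parent := chainParent _
  wt := fun v => if v.val < m / 6 then 3 else
    if 1 ≤ m % 6 ∧ v.val = m / 6 then 2 else 1
  prox := fun a b => a.val = b.val + 1 ∨
    (m % 6 = 0 ∧ (a.val = m / 6 + 1 ∨ a.val = m / 6 + 2) ∧ b.val + 1 = m / 6) ∨
    (m % 6 = 1 ∧ a.val = m / 6 + 1 ∧ b.val + 1 = m / 6) ∨
    (m % 6 = 2 ∧ ((a.val = m / 6 + 1 ∧ b.val + 1 = m / 6) ∨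
                  (a.val = m / 6 + 2 ∧ b.val = m / 6)))

/-- The diagram `J_{l,k}` (`l ≥ 2`, `k ≥ 0`): a chain of `l - 1` free vertices of weight `3`
followed by the diagram `D_{k+4}`. -/
def diagJ (l k : ℕ) : PreDiagram where
  n := (l - 1) + k / 2 + (if k % 2 = 0 then 1 else 3)
  parent := chainParent _
  wt := fun v => if v.val ≤ l - 1 then 3 else if v.val ≤ l - 1 + k / 2 then 2 else 1
  prox := fun a b => a.val = b.val + 1 ∨
    (k % 2 = 1 ∧ a.val = (l - 1) + k / 2 + 2 ∧ b.val = (l - 1) + k / 2)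

/-- The diagram `X_{1,0}`: a single root of weight `4`. -/
def diagX10 : PreDiagram where
  n := 1
  parent := chainParent _
  wt := fun _ => 4
  prox := fun a b => a.val = b.val + 1

/-- The diagram `X_{1,1}`: a root of weight `4` followed by a chain of two vertices of
weight `1`, both proximate to the root. -/
def diagX11 : PreDiagram where
  n := 3
  parent := chainParent _
  wt := fun v => if v.val = 0 then 4 else 1
  prox := fun a b => a.val = b.val + 1 ∨ (a.val = 2 ∧ b.val = 0)

/-- The diagram `X_{1,2}`: a root of weight `4` followed by one free vertex of weight `2`. -/
def diagX12 : PreDiagram where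
  n := 2
  parent := chainParent _
  wt := fun v => if v.val = 0 then 4 else 2
  prox := fun a b => a.val = b.val + 1

/-- The diagram `Z_{11}`: a root of weight `4` followed by a chain of three vertices of
weight `1`, all proximate to the root. -/
def diagZ11 : PreDiagram where
  n := 4
  parent := chainParent _
  wt := fun v => if v.val = 0 then 4 else 1
  prox := fun a b => a.val = b.val + 1 ∨ ((a.val = 2 ∨ a.val = 3) ∧ b.val = 0)

/-- The diagram `Y_{1,1}`: a root of weight `4` with two immediate free successors of
weight `1`, each of which has one immediate successor of weight `1` that is remotely
proximate to the root. -/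
def diagY11 : PreDiagram where
  n := 5
  parent := fun v =>
    if v.val = 0 then none
    else if v.val ≤ 2 then some ⟨0, by omega⟩
    else if v.val = 3 then some ⟨1, by omega⟩
    else some ⟨2, by omega⟩
  wt := fun v => if v.val = 0 then 4 else 1
  prox := fun a b => (a.val = 1 ∧ b.val = 0) ∨ (a.val = 2 ∧ b.val = 0) ∨
    (a.val = 3 ∧ (b.val = 1 ∨ b.val = 0)) ∨ (a.val = 4 ∧ (b.val = 2 ∨ b.val = 0))

/-- The disjoint union of two diagrams. -/
def disjUnion (D₁ D₂ : PreDiagram) : PreDiagram where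
  n := D₁.n + D₂.n
  parent := fun v =>
    if h : v.val < D₁.n then
      (D₁.parent ⟨v.val, h⟩).map
        (fun w => ⟨w.val, Nat.lt_of_lt_of_le w.isLt (Nat.le_add_right _ _)⟩)
    else
      (D₂.parent ⟨v.val - D₁.n, by have := v.isLt; omega⟩).map
        (fun w => ⟨D₁.n + w.val, by have := w.isLt; omega⟩)
  wt := fun v =>
    if h : v.val < D₁.n then D₁.wt ⟨v.val, h⟩
    else D₂.wt ⟨v.val - D₁.n, by have := v.isLt; omega⟩
  prox := fun a b =>
    (∃ (ha : a.val < D₁.n) (hb : b.val < D₁.n), D₁.prox ⟨a.val, ha⟩ ⟨b.val, hb⟩) ∨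
    (∃ (_ : D₁.n ≤ a.val) (_ : D₁.n ≤ b.val),
      D₂.prox ⟨a.val - D₁.n, by have := a.isLt; omega⟩
              ⟨b.val - D₁.n, by have := b.isLt; omega⟩)

end PreDiagram

/-!
The codimension is a sum of local terms, `C(m_V + 1, 2)` minus `1` if `V` is a root and minus `1`
if `V` is free. Follow a root `R` down to a leaf: weights do not increase along the way, and a leaf
of weight `1` is remotely proximate to a vertex between `R` and itself, which must be strictly
heavier than it. Hence every root has weight at least `2`, so all local terms are nonnegative, and
a single root of weight `5` already forces `cod D ≥ C(6, 2) - 2 = 13`.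
-/

namespace PreDiagram

variable {D : PreDiagram} {R u v w : Fin D.n}

lemma IsRoot.eq_of_pred (hR : D.IsRoot R) (h : D.Pred u R) : u = R := by
  rcases h.cases_tail with h_eq | ⟨c, -, hc : D.parent R = some c⟩
  · exact h_eq.symm
  · exact absurd (hR.symm.trans hc) (Option.some_ne_none c).symm

lemma Pred.total (hu : D.Pred u w) (hv : D.Pred v w) : D.Pred u v ∨ D.Pred v u := by
  have parent_unique : Relator.RightUnique (Function.swap D.ImPred) := fun _ _ _ ha hb =>
    Option.some.inj (ha.symm.trans hb)
  simpa only [Relation.reflTransGen_swap] using!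
    Relation.ReflTransGen.total_of_right_unique parent_unique hv.swap hu.swap

lemma IsRoot.pred_of_pred (hR : D.IsRoot R) (hRw : D.Pred R w) (hu : D.Pred u w) :
    D.Pred R u := by
  rcases hRw.total hu with h | h
  · exact h
  · exact hR.eq_of_pred h ▸ .refl

namespace IsMED

lemma wellFounded_swap_properPred (hD : D.IsMED) :
    WellFounded (Function.swap D.ProperPred) :=
  have : Std.Irrefl (Function.swap D.ProperPred) := ⟨hD.forest⟩
  have : IsTrans (Fin D.n) (Function.swap D.ProperPred) := ⟨fun _ _ _ h h' => h'.trans h⟩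
  Finite.wellFounded_of_trans_of_irrefl _

lemma exists_pred_isLeaf (hD : D.IsMED) (v : Fin D.n) : ∃ l, D.Pred v l ∧ D.IsLeaf l := by
  induction v using hD.wellFounded_swap_properPred.induction with
  | _ v ih =>
    by_cases hv : D.IsLeaf v
    · exact ⟨v, .refl, hv⟩
    · obtain ⟨w, hvw⟩ : ∃ w, D.ImPred v w := by simpa only [IsLeaf, not_forall, not_not] using hv
      obtain ⟨l, hwl, hl⟩ := ih w (.single hvw)
      exact ⟨l, .head hvw hwl, hl⟩

lemma wt_le_of_prox (hD : D.IsMED) (h : D.prox w v) : D.wt w ≤ D.wt v :=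
  (single_le_sum (fun _ _ => Nat.zero_le _) (by simpa using h)).trans (hD.prox_ineq v)

lemma wt_le_of_pred (hD : D.IsMED) (h : D.Pred v w) : D.wt w ≤ D.wt v := by
  induction h with
  | refl => exact le_rfl
  | tail _ hbc ih => exact (hD.wt_le_of_prox (hD.prox_parent _ _ hbc)).trans ih

/- The immediate successor of `v` on the way to `w` is proximate to `v` as well, so its positive
weight also counts in the proximity inequality at `v`. -/
lemma wt_lt_of_remoteProx (hD : D.IsMED) (h : D.RemoteProx w v) : D.wt w < D.wt v := by
  obtain ⟨hwv, h_proper, h_not_imPred⟩ := h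
  obtain ⟨c, hvc, -⟩ := Relation.TransGen.head'_iff.1 h_proper
  have hcw : c ≠ w := fun h_eq => h_not_imPred (h_eq ▸ hvc)
  have h_subset : {c, w} ⊆ univ.filter (fun x => D.prox x v) := by
    simp [insert_subset_iff, hwv, hD.prox_parent c v hvc]
  calc D.wt w < D.wt c + D.wt w := Nat.lt_add_of_pos_left (hD.wt_pos c)
    _ = ∑ x ∈ {c, w}, D.wt x := (sum_pair hcw).symm
    _ ≤ ∑ x ∈ univ.filter (fun x => D.prox x v), D.wt x := sum_le_sum_of_subset h_subset
    _ ≤ D.wt v := hD.prox_ineq v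

lemma two_le_wt_of_isRoot (hD : D.IsMED) (hR : D.IsRoot R) : 2 ≤ D.wt R := by
  obtain ⟨l, hRl, hl⟩ := hD.exists_pred_isLeaf R
  rcases (hD.wt_pos l).eq_or_lt' with h_one | h_two
  · obtain ⟨t, ht⟩ := hD.minimal l hl h_one
    have h_lt : D.wt l < D.wt t := hD.wt_lt_of_remoteProx ht
    have h_le : D.wt t ≤ D.wt R :=
      hD.wt_le_of_pred (hR.pred_of_pred hRl ht.2.1.to_reflTransGen)
    omega
  · exact le_trans h_two (hD.wt_le_of_pred hRl)

end IsMED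

/-- The contribution of the vertex `v` to the codimension of `D`. -/
noncomputable def localCod (D : PreDiagram) (v : Fin D.n) : ℤ :=
  (D.wt v + 1).choose 2 - ((if D.IsRoot v then 1 else 0) + (if D.IsFree v then 1 else 0))

lemma sum_localCod (D : PreDiagram) : ∑ v, D.localCod v = D.cod := by
  simp only [localCod, cod, degD, dimD, rts, frs, sum_sub_distrib, sum_add_distrib, sum_boole,
    Nat.cast_add, Nat.cast_sum]

lemma choose_two_le_localCod_add_two (D : PreDiagram) (v : Fin D.n) :
    ((D.wt v + 1).choose 2 : ℤ) ≤ D.localCod v + 2 := by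
  unfold localCod
  split_ifs <;> omega

lemma choose_two_le_localCod_add_one (hv : ¬ D.IsRoot v) :
    ((D.wt v + 1).choose 2 : ℤ) ≤ D.localCod v + 1 := by
  unfold localCod
  split_ifs <;> omega

namespace IsMED

lemma localCod_nonneg (hD : D.IsMED) (v : Fin D.n) : 0 ≤ D.localCod v := by
  by_cases hv : D.IsRoot v
  · have h_three : 3 ≤ (D.wt v + 1).choose 2 :=
      Nat.choose_le_choose (a := 3) 2 (Nat.succ_le_succ (hD.two_le_wt_of_isRoot hv))
    have h_local := D.choose_two_le_localCod_add_two v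
    omega
  · have h_pos : 0 < (D.wt v + 1).choose 2 :=
      Nat.choose_pos (Nat.succ_le_succ (hD.wt_pos v))
    have h_local := choose_two_le_localCod_add_one hv
    omega

lemma choose_two_le_cod_add_two (hD : D.IsMED) (v : Fin D.n) :
    ((D.wt v + 1).choose 2 : ℤ) ≤ D.cod + 2 := by
  have h_le : D.localCod v ≤ ∑ w, D.localCod w :=
    single_le_sum (fun w _ => hD.localCod_nonneg w) (mem_univ v)
  rw [sum_localCod] at h_le
  exact (D.choose_two_le_localCod_add_two v).trans (by gcongr)

end IsMED

end PreDiagram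

theorem statement4_general (D : PreDiagram) (hD : D.IsMED) (R : Fin D.n) (hR : D.IsRoot R)
    (hcod : D.cod ≤ 12) : 2 ≤ D.wt R ∧ D.wt R ≤ 4 := by
  refine ⟨hD.two_le_wt_of_isRoot hR, ?_⟩
  by_contra! h_five
  have h_fifteen : 15 ≤ (D.wt R + 1).choose 2 :=
    Nat.choose_le_choose (a := 6) 2 (Nat.succ_le_succ h_five)
  have h_cod := hD.choose_two_le_cod_add_two R
  omega

open PreDiagram in
/-- A nonempty minimal Enriques diagram with exactly one root `R` and `cod(D) ≤ 10`
satisfies `2 ≤ m_R ≤ 4`. -/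
theorem statement4 (D : PreDiagram) (hD : D.IsMED) (hne : 0 < D.n) (R : Fin D.n)
    (hR : D.IsRoot R) (huniq : ∀ v, D.IsRoot v → v = R) (hcod : D.cod ≤ 10) :
    2 ≤ D.wt R ∧ D.wt R ≤ 4 :=
  statement4_general D hD R hR (hcod.trans (by norm_num))
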